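/- Let φ be the discrete Gaussian free field on Λ_N (d ≥ 3) with zero boundary conditions, and A = {x_1,…,x_m} ⊆ Λ_N with A_i = {x_{i+1},…,x_m}. Then P_N(φ ∈ [0,a] on A) ≥ ∏_{i=1}^m P_{A_i^c}(φ(x_i) ∈ [0,a]) ≥ [c·min(1/2,a)]^m for a constant c = c(d) > 0 independent of N, A, a. -/

import Mathlib

open MeasureTheory Real Finset

noncomputable section

/-- The nearest neighbours of a point of `ℤ^d`. -/
def nbrs (d : ℕ) (x : Fin d → ℤ) : Finset (Fin d → ℤ) :=
  (Finset.univ : Finset (Fin d × Bool)).image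
    (fun p => Function.update x p.1 (x p.1 + if p.2 then 1 else -1))

/-- Outer boundary of a finite subset of `ℤ^d`. -/
def bdry (d : ℕ) (A : Finset (Fin d → ℤ)) : Finset (Fin d → ℤ) :=
  A.biUnion (nbrs d) \ A

/-- The Gaussian free field Hamiltonian
`H_A(φ) = (1/8d) ∑_{x,y ∈ A ∪ ∂A, |x-y| = 1} (φ x - φ y)²`. -/
def ham (d : ℕ) (A : Finset (Fin d → ℤ)) (φ : (Fin d → ℤ) → ℝ) : ℝ :=
  (1 / (8 * d)) * ∑ x ∈ A ∪ bdry d A, ∑ y ∈ A ∪ bdry d A,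
    if y ∈ nbrs d x then (φ x - φ y) ^ 2 else 0

/-- Extension of a field on `A` by zero boundary conditions. -/
def extz {d : ℕ} (A : Finset (Fin d → ℤ)) (ψ : A → ℝ) : (Fin d → ℤ) → ℝ :=
  fun x => if h : x ∈ A then ψ ⟨x, h⟩ else 0

/-- Unnormalized density of the zero-boundary GFF on `A`. -/
def gffDensity (d : ℕ) (A : Finset (Fin d → ℤ)) (ψ : A → ℝ) : ℝ :=
  Real.exp (-ham d A (extz A ψ))

/-- Partition function of the zero-boundary GFF on `A`. -/
def gffZ (d : ℕ) (A : Finset (Fin d → ℤ)) : ℝ :=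
  ∫ ψ : A → ℝ, gffDensity d A ψ

/-- The zero-boundary Gaussian free field measure on `A ⊂ ℤ^d`. -/
def gff (d : ℕ) (A : Finset (Fin d → ℤ)) : Measure (A → ℝ) :=
  (ENNReal.ofReal (gffZ d A))⁻¹ •
    volume.withDensity (fun ψ => ENNReal.ofReal (gffDensity d A ψ))

/-- The box `Λ_N = {-⌊N/2⌋, …, ⌊N/2⌋}^d`. -/
def box (d N : ℕ) : Finset (Fin d → ℤ) :=
  Fintype.piFinset (fun _ => Finset.Icc (-(N / 2 : ℤ)) (N / 2 : ℤ))

/-- Unnormalized density of the square-well pinned field on `Λ_N`. -/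
def pinDensity (d N : ℕ) (a b : ℝ) (ψ : box d N → ℝ) : ℝ :=
  Real.exp (-ham d (box d N) (extz (box d N) ψ) +
    b * ∑ x : box d N, (if ψ x ∈ Set.Icc 0 a then (1 : ℝ) else 0))

/-- Partition function of the pinned field. -/
def pinZ (d N : ℕ) (a b : ℝ) : ℝ := ∫ ψ : box d N → ℝ, pinDensity d N a b ψ

/-- The square-well pinning measure `P̃_{N,a,b}` on the box `Λ_N`. -/
def pin (d N : ℕ) (a b : ℝ) : Measure (box d N → ℝ) :=
  (ENNReal.ofReal (pinZ d N a b))⁻¹ •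
    volume.withDensity (fun ψ => ENNReal.ofReal (pinDensity d N a b ψ))

/-- The number of pinned points `ξ̃_N`. -/
def numPinned (d N : ℕ) (a : ℝ) (ψ : box d N → ℝ) : ℕ :=
  (Finset.univ.filter (fun x : box d N => ψ x ∈ Set.Icc 0 a)).card

/-- The hard wall event `Ω⁺_B` within the box, for fields on `Λ_N`: nonnegativity
at every point of `B`. -/
def wallOn (d N : ℕ) (B : Finset (Fin d → ℤ)) : Set (box d N → ℝ) :=
  {ψ | ∀ x : box d N, (x : Fin d → ℤ) ∈ B → 0 ≤ ψ x}

/-- The hard-wall event for the zero-boundary GFF on `A`. -/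
def wall {d : ℕ} (A : Finset (Fin d → ℤ)) : Set (A → ℝ) := {ψ | ∀ x, 0 ≤ ψ x}

end

/-!
Represent the field as the Gibbs measure with weight `exp (-Q)` of one quadratic form `Q`. Adding to
the field with zero boundary values the `Q`-harmonic extension `h` of `s` produces the field with
boundary values `s`, since `Q (h + η) = Q h + Q η` for `η` vanishing on the boundary. Clipping to
`[0, a]` decreases the energy, so `h` takes values in `[0, a]` as soon as `s` does; translating a
centred Gaussian by such an amount only increases its mass in `[0, a]`. Conditioning on
`x_{i+1}, …, x_m`, one point at a time, gives the product bound.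

Each factor is the mass which a centred Gaussian gives to `[0, a]`, and it only remains to bound the
variance, that is, `φ x ^ 2` by a multiple of the energy of `φ`. By Cauchy-Schwarz (Thomson's
principle) it is enough to send a unit flow of finite energy from `x` to infinity. Pólya's urn with
`d` colours is one: it is uniform on the compositions of `n` into `d` parts, whose number `K n`
grows like `n ^ (d - 1)`, and its energy is at most `∑ (K n)⁻¹`, finite for `d ≥ 3`.
-/

open ProbabilityTheory
open scoped BigOperators ENNReal NNReal

section Gaussian

lemma antitoneOn_gaussianPDFReal (v : ℝ≥0) : AntitoneOn (gaussianPDFReal 0 v) (Set.Ici 0) := by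
  intro s hs t _ hst
  simp only [gaussianPDFReal_def, sub_zero]
  have hs : (0 : ℝ) ≤ s := hs
  gcongr

lemma even_gaussianPDFReal (v : ℝ≥0) : Function.Even (gaussianPDFReal 0 v) := by
  intro t
  simp only [gaussianPDFReal_def, sub_zero, neg_sq]

lemma intervalIntegral_le_shift_of_even_antitoneOn {f : ℝ → ℝ} (hf : Function.Even f)
    (hanti : AntitoneOn f (Set.Ici 0)) (hint : ∀ s t, IntervalIntegrable f volume s t)
    {a t : ℝ} (ht : t ∈ Set.Icc 0 a) :
    ∫ r in 0..a, f r ≤ ∫ r in (-t)..(a - t), f r := by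
  have reflected : ∫ r in (-t)..0, f r = ∫ r in 0..t, f r := by
    rw [← neg_zero, ← intervalIntegral.integral_comp_neg]
    simp only [hf _, neg_zero]
  have tail_le : ∫ r in (a - t)..a, f r ≤ ∫ r in 0..t, f r := by
    calc ∫ r in (a - t)..a, f r = ∫ r in 0..t, f (r + (a - t)) := by
          rw [intervalIntegral.integral_comp_add_right]
          congr 1 <;> ring
      _ ≤ ∫ r in 0..t, f r := by
          refine intervalIntegral.integral_mono_on ht.1 ?_ (hint _ _) fun r hr ↦ ?_
          · simpa using (hint (0 + (a - t)) (t + (a - t))).comp_add_right (a - t)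
          · exact hanti hr.1 (add_nonneg hr.1 (sub_nonneg.2 ht.2))
              (le_add_of_nonneg_right (sub_nonneg.2 ht.2))
  have split_left := intervalIntegral.integral_add_adjacent_intervals (hint (-t) 0) (hint 0 (a - t))
  have split_right :=
    intervalIntegral.integral_add_adjacent_intervals (hint 0 (a - t)) (hint (a - t) a)
  linarith

lemma gaussianReal_Icc_le_shift (v : ℝ≥0) {a t : ℝ} (ht : t ∈ Set.Icc 0 a) :
    gaussianReal 0 v (Set.Icc 0 a) ≤ gaussianReal t v (Set.Icc 0 a) := by
  rcases eq_or_ne v 0 with rfl | hv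
  · exact prob_le_one.trans_eq (by simp [ht])
  have prob_eq (μ : ℝ) : gaussianReal μ v (Set.Icc 0 a) =
      ENNReal.ofReal (∫ r in (0 - μ)..(a - μ), gaussianPDFReal 0 v r) := by
    rw [gaussianReal_apply_eq_integral μ hv, integral_Icc_eq_integral_Ioc,
      ← intervalIntegral.integral_of_le (ht.1.trans ht.2),
      ← intervalIntegral.integral_comp_sub_right]
    simp only [gaussianPDFReal_sub, zero_add]
  simp only [prob_eq, sub_zero, zero_sub]
  exact ENNReal.ofReal_le_ofReal <| intervalIntegral_le_shift_of_even_antitoneOn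
    (even_gaussianPDFReal v) (antitoneOn_gaussianPDFReal v)
    (fun _ _ ↦ (integrable_gaussianPDFReal 0 v).intervalIntegrable) ht

lemma gaussianReal_Icc_anti_variance {w v : ℝ≥0} (hwv : w ≤ v) (a : ℝ) :
    gaussianReal 0 v (Set.Icc 0 a) ≤ gaussianReal 0 w (Set.Icc 0 a) := by
  rcases eq_or_ne v 0 with rfl | hv
  · rw [nonpos_iff_eq_zero.1 hwv]
  set c : ℝ≥0 := NNReal.sqrt (w / v)
  have c_le_one : c ≤ 1 := NNReal.sqrt_le_one.2 (div_le_one_of_le₀ hwv zero_le)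
  have map_eq : (gaussianReal 0 v).map ((c : ℝ) * ·) = gaussianReal 0 w := by
    rw [gaussianReal_map_const_mul, mul_zero]
    congr
    have sq_mul : c ^ 2 * v = w := by rw [NNReal.sq_sqrt, div_mul_cancel₀ _ hv]
    exact NNReal.eq (congrArg NNReal.toReal sq_mul)
  rw [← map_eq, Measure.map_apply (by fun_prop) measurableSet_Icc]
  exact measure_mono fun t ht ↦ ⟨mul_nonneg c.2 ht.1,
    (mul_le_of_le_one_left ht.1 (NNReal.coe_le_one.2 c_le_one)).trans ht.2⟩

lemma le_gaussianReal_Icc {w v : ℝ≥0} (hwv : w ≤ v) (a : ℝ) {b : ℝ} (hb : 0 ≤ b) :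
    ENNReal.ofReal (gaussianPDFReal 0 v b * min b a) ≤ gaussianReal 0 w (Set.Icc 0 a) := by
  rcases eq_or_ne v 0 with rfl | hv
  · simp
  calc ENNReal.ofReal (gaussianPDFReal 0 v b * min b a)
      = ∫⁻ _ in Set.Icc 0 (min b a), gaussianPDF 0 v b := by
        rw [setLIntegral_const, Real.volume_Icc, sub_zero,
          ENNReal.ofReal_mul (gaussianPDFReal_nonneg 0 v b), gaussianPDF]
    _ ≤ ∫⁻ r in Set.Icc 0 (min b a), gaussianPDF 0 v r := by
        refine setLIntegral_mono (by fun_prop) fun r hr ↦ ENNReal.ofReal_le_ofReal ?_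
        exact antitoneOn_gaussianPDFReal v hr.1 hb (hr.2.trans (min_le_left _ _))
    _ = gaussianReal 0 v (Set.Icc 0 (min b a)) := (gaussianReal_apply 0 hv _).symm
    _ ≤ gaussianReal 0 v (Set.Icc 0 a) := measure_mono (Set.Icc_subset_Icc_right (min_le_right _ _))
    _ ≤ gaussianReal 0 w (Set.Icc 0 a) := gaussianReal_Icc_anti_variance hwv a

end Gaussian

section HarmonicExtension

variable {V : Type*} {Q : QuadraticForm ℝ (V → ℝ)} {B C : Finset V} {h : V → ℝ}

/-- The quadratic form `Q` is positive definite on the fields supported in `B`. -/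
def PosDefOn (Q : QuadraticForm ℝ (V → ℝ)) (B : Finset V) : Prop :=
  ∀ φ : V → ℝ, Function.support φ ⊆ B → φ ≠ 0 → 0 < Q φ

/-- `h` is harmonic on `B` for the energy `Q`: it is orthogonal to every field supported in `B`. -/
def IsHarmonicOn (Q : QuadraticForm ℝ (V → ℝ)) (B : Finset V) (h : V → ℝ) : Prop :=
  ∀ η : V → ℝ, Function.support η ⊆ B → Q.IsOrtho h η

/-- The Markov property of Dirichlet forms: normal contractions do not increase the energy. -/
def IsMarkovian (Q : QuadraticForm ℝ (V → ℝ)) : Prop :=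
  ∀ f : ℝ → ℝ, LipschitzWith 1 f → f 0 = 0 → ∀ φ : V → ℝ, Q (f ∘ φ) ≤ Q φ

/-- The field with energy `Q` and zero boundary condition off `B` has variance at most `v` at each
point; the variance at `x` is the supremum of `φ x ^ 2 / (2 * Q φ)` over `φ` supported in `B`. -/
def VarianceBoundedOn (Q : QuadraticForm ℝ (V → ℝ)) (B : Finset V) (v : ℝ≥0) : Prop :=
  ∀ φ : V → ℝ, Function.support φ ⊆ B → ∀ x, φ x ^ 2 ≤ 2 * v * Q φ

lemma VarianceBoundedOn.mono {v : ℝ≥0} (hC : VarianceBoundedOn Q C v) (hBC : B ⊆ C) :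
    VarianceBoundedOn Q B v :=
  fun φ hφ ↦ hC φ (hφ.trans (coe_subset.2 hBC))

lemma VarianceBoundedOn.posDefOn {v : ℝ≥0} (hB : VarianceBoundedOn Q B v) : PosDefOn Q B := by
  intro φ hφ φ_ne
  obtain ⟨x, hx⟩ := Function.ne_iff.1 φ_ne
  exact pos_of_mul_pos_right ((sq_pos_of_ne_zero hx).trans_le (hB φ hφ x)) (by positivity)

lemma PosDefOn.mono (hC : PosDefOn Q C) (hBC : B ⊆ C) : PosDefOn Q B :=
  fun φ hφ ↦ hC φ (hφ.trans (coe_subset.2 hBC))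

lemma IsHarmonicOn.const_smul (hh : IsHarmonicOn Q B h) (t : ℝ) : IsHarmonicOn Q B (t • h) := by
  intro η hη
  have polar_eq := QuadraticMap.isOrtho_polarBilin.2 (hh η hη)
  exact QuadraticMap.isOrtho_polarBilin.1
    (by rw [map_smul, LinearMap.smul_apply, polar_eq, smul_zero])

lemma PosDefOn.exists_harmonic_extension (hB : PosDefOn Q B) (s : V → ℝ) :
    ∃ h : V → ℝ, Set.EqOn h s (↑B)ᶜ ∧ IsHarmonicOn Q B h := by
  classical
  let ext : (B → ℝ) →ₗ[ℝ] V → ℝ := Function.ExtendByZero.linearMap ℝ Subtype.val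
  have ext_mem (ψ : B → ℝ) (b : B) : ext ψ b = ψ b := Subtype.val_injective.extend_apply _ _ _
  have ext_notMem (ψ : B → ℝ) {y : V} (hy : y ∉ B) : ext ψ y = 0 :=
    Function.extend_apply' _ _ _ fun ⟨b, hb⟩ ↦ hy (hb ▸ b.2)
  let form : (B → ℝ) →ₗ[ℝ] Module.Dual ℝ (B → ℝ) := Q.polarBilin.compl₁₂ ext ext
  have form_injective : Function.Injective form := by
    refine (injective_iff_map_eq_zero form).2 fun ψ hψ ↦ ?_
    have energy_eq : 2 * Q (ext ψ) = 0 := by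
      simpa [form, QuadraticMap.polar_self] using LinearMap.congr_fun hψ ψ
    by_contra ψ_ne
    refine (hB (ext ψ) (Function.support_subset_iff'.2 fun y hy ↦ ext_notMem ψ hy) ?_).ne'
      (by linarith)
    exact fun h0 ↦ ψ_ne (funext fun b ↦ (ext_mem ψ b).symm.trans (congrFun h0 b))
  have form_surjective : Function.Surjective form :=
    (LinearMap.injective_iff_surjective_of_finrank_eq_finrank
      Subspace.dual_finrank_eq.symm).1 form_injective
  obtain ⟨ψ, hψ⟩ := form_surjective (-(Q.polarBilin s ∘ₗ ext))
  refine ⟨s + ext ψ, fun y hy ↦ by simp [ext_notMem ψ hy], fun η hη ↦ ?_⟩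
  have ext_restrict : ext (fun b ↦ η b) = η := by
    ext y
    by_cases hy : y ∈ B
    · exact ext_mem _ ⟨y, hy⟩
    · rw [ext_notMem _ hy, Function.support_subset_iff'.1 hη y hy]
  have polar_eq : Q.polarBilin (ext ψ) η = -Q.polarBilin s η := by
    simpa [form, ext_restrict] using LinearMap.congr_fun hψ fun b ↦ η b
  exact QuadraticMap.isOrtho_polarBilin.1
    (by rw [map_add, LinearMap.add_apply, polar_eq, add_neg_cancel])

lemma IsHarmonicOn.mem_Icc (hh : IsHarmonicOn Q B h) (hQ : IsMarkovian Q) (hB : PosDefOn Q B)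
    {a b : ℝ} (hab : 0 ∈ Set.Icc a b) (bdry_mem : ∀ y ∉ B, h y ∈ Set.Icc a b) (x : V) :
    h x ∈ Set.Icc a b := by
  let clip : ℝ → ℝ := fun t ↦ Set.projIcc a b (hab.1.trans hab.2) t
  have clip_of_mem {t : ℝ} (ht : t ∈ Set.Icc a b) : clip t = t :=
    congrArg Subtype.val (Set.projIcc_of_mem _ ht)
  have clip_lipschitz : LipschitzWith 1 clip := LipschitzWith.projIcc _
  have clipped_energy : Q (clip ∘ h) ≤ Q h := hQ clip clip_lipschitz (clip_of_mem hab) h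
  have diff_support : Function.support (clip ∘ h - h) ⊆ B :=
    Function.support_subset_iff'.2 fun y hy ↦ sub_eq_zero.2 (clip_of_mem (bdry_mem y hy))
  have pythagoras : Q (clip ∘ h) = Q h + Q (clip ∘ h - h) := by
    rw [← (hh _ diff_support), add_sub_cancel]
  have clip_eq : clip ∘ h = h := by
    by_contra clip_ne
    linarith [hB _ diff_support (sub_ne_zero.2 clip_ne)]
  rw [← clip_eq]
  exact (Set.projIcc a b _ (h x)).2

end HarmonicExtension

section GibbsMeasure

variable {V : Type*} {Q : QuadraticForm ℝ (V → ℝ)} {B S : Finset V} {h s : V → ℝ}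

/-- The Boltzmann weight of a field with quadratic energy `Q`. -/
noncomputable def gibbsWeight (Q : QuadraticForm ℝ (V → ℝ)) (φ : V → ℝ) : ℝ≥0∞ :=
  ENNReal.ofReal (exp (-Q φ))

lemma measurable_gibbsWeight (hQ : Measurable Q) : Measurable (gibbsWeight Q) := by
  unfold gibbsWeight
  fun_prop

lemma gibbsWeight_ne_zero (Q : QuadraticForm ℝ (V → ℝ)) (φ : V → ℝ) : gibbsWeight Q φ ≠ 0 := by
  simp [gibbsWeight, exp_pos]

lemma gibbsWeight_add_of_isOrtho {φ η : V → ℝ} (hφη : Q.IsOrtho φ η) :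
    gibbsWeight Q (φ + η) = gibbsWeight Q φ * gibbsWeight Q η := by
  rw [gibbsWeight, hφη, neg_add, exp_add, ENNReal.ofReal_mul (exp_pos _).le]
  rfl

lemma gibbsWeight_smul_eq_mul_gaussianPDF {u : V → ℝ} (hu : 0 < Q u) (t : ℝ) :
    gibbsWeight Q (t • u) =
      ENNReal.ofReal √(π / Q u) * gaussianPDF 0 (2 * Q u).toNNReal⁻¹ t := by
  have coe_variance : ((2 * Q u).toNNReal⁻¹ : ℝ≥0) = (2 * Q u)⁻¹ := by
    rw [NNReal.coe_inv, Real.coe_toNNReal _ (by positivity)]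
  have normalization : 2 * π * (2 * Q u)⁻¹ = π / Q u := by field_simp
  have exponent : -(t - 0) ^ 2 / (2 * (2 * Q u)⁻¹) = -(t * t * Q u) := by field_simp; ring
  rw [gaussianPDF, ← ENNReal.ofReal_mul (sqrt_nonneg _), gaussianPDFReal, coe_variance,
    normalization, exponent, mul_inv_cancel_left₀ (by positivity), gibbsWeight,
    QuadraticMap.map_smul, smul_eq_mul]

lemma measurableSet_pi_Icc (S : Finset V) (a : ℝ) :
    MeasurableSet ((S : Set V).pi fun _ ↦ Set.Icc (0 : ℝ) a) :=
  MeasurableSet.pi S.countable_toSet fun _ _ ↦ measurableSet_Icc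

variable [DecidableEq V]

/-- The unnormalized Gibbs measure on `B` with energy `Q` and boundary condition `s`, as a measure
on fields on all of `V` which agree with `s` off `B`. -/
noncomputable def gibbsMeasure (Q : QuadraticForm ℝ (V → ℝ)) (B : Finset V) (s : V → ℝ) :
    Measure (V → ℝ) :=
  ((volume : Measure (B → ℝ)).map (Function.updateFinset s B)).withDensity (gibbsWeight Q)

/-- The Gibbs field on `B` with energy `Q` and boundary condition `s`: a probability measure on
fields which agree with `s` off `B`, whenever `Q` is measurable and positive definite on `B`. -/
noncomputable def gibbsField (Q : QuadraticForm ℝ (V → ℝ)) (B : Finset V) (s : V → ℝ) :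
    Measure (V → ℝ) :=
  (gibbsMeasure Q B s Set.univ)⁻¹ • gibbsMeasure Q B s

lemma support_updateFinset_zero_subset (ψ : B → ℝ) :
    Function.support (Function.updateFinset (0 : V → ℝ) B ψ) ⊆ B :=
  Function.support_subset_iff'.2 fun _ hy ↦ dif_neg (mem_coe.not.1 hy)

lemma gibbsMeasure_apply (hQ : Measurable Q) (B : Finset V) (s : V → ℝ) {E : Set (V → ℝ)}
    (hE : MeasurableSet E) :
    gibbsMeasure Q B s E = (∫⋯∫⁻_B, E.indicator (gibbsWeight Q) ∂fun _ ↦ volume) s := by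
  rw [gibbsMeasure, withDensity_apply _ hE, ← lintegral_indicator hE,
    lintegral_map ((measurable_gibbsWeight hQ).indicator hE) measurable_updateFinset]
  rfl

lemma gibbsMeasure_union_apply (hQ : Measurable Q) (hSB : Disjoint S B) (s : V → ℝ)
    {E : Set (V → ℝ)} (hE : MeasurableSet E) :
    gibbsMeasure Q (S ∪ B) s E =
      ∫⁻ σ : S → ℝ, gibbsMeasure Q B (Function.updateFinset s S σ) E := by
  simp only [gibbsMeasure_apply hQ _ _ hE]
  rw [lmarginal_union _ _ ((measurable_gibbsWeight hQ).indicator hE) hSB]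
  rfl

lemma gibbsMeasure_insert_apply (hQ : Measurable Q) {x : V} (hx : x ∉ B) (s : V → ℝ)
    {E : Set (V → ℝ)} (hE : MeasurableSet E) :
    gibbsMeasure Q (insert x B) s E = ∫⁻ t, gibbsMeasure Q B (Function.update s x t) E := by
  simp only [gibbsMeasure_apply hQ _ _ hE]
  exact lmarginal_insert _ ((measurable_gibbsWeight hQ).indicator hE) hx s

lemma gibbsMeasure_ae_eq_boundary (Q : QuadraticForm ℝ (V → ℝ)) (s : V → ℝ) {y : V} (hy : y ∉ B) :
    ∀ᵐ φ ∂gibbsMeasure Q B s, φ y = s y := by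
  refine (withDensity_absolutelyContinuous _ _).ae_le ?_
  refine (ae_map_iff (p := fun φ : V → ℝ ↦ φ y = s y) measurable_updateFinset.aemeasurable
    (measurableSet_eq_fun (measurable_pi_apply y) measurable_const)).2 ?_
  exact Filter.Eventually.of_forall fun ψ ↦ by simp [Function.updateFinset, hy]

lemma gibbsMeasure_eq_map_add (hQ : Measurable Q) (hhs : Set.EqOn h s (↑B)ᶜ)
    (hh : IsHarmonicOn Q B h) :
    gibbsMeasure Q B s = gibbsWeight Q h • (gibbsMeasure Q B 0).map (h + ·) := by
  have update_eq (ψ : B → ℝ) : Function.updateFinset s B ψ =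
      h + Function.updateFinset (0 : V → ℝ) B (ψ - fun b : B ↦ h b) := by
    ext y
    by_cases hy : y ∈ B
    · simp [Function.updateFinset, hy]
    · simp [Function.updateFinset, hy, hhs hy]
  have weight_eq (ψ : B → ℝ) : gibbsWeight Q (h + Function.updateFinset (0 : V → ℝ) B ψ) =
      gibbsWeight Q h * gibbsWeight Q (Function.updateFinset (0 : V → ℝ) B ψ) :=
    gibbsWeight_add_of_isOrtho (hh _ (support_updateFinset_zero_subset ψ))
  ext E hE
  have shifted_indicator (ψ : B → ℝ) :
      E.indicator (gibbsWeight Q) (h + Function.updateFinset (0 : V → ℝ) B ψ) = gibbsWeight Q h *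
        ((h + ·) ⁻¹' E).indicator (gibbsWeight Q) (Function.updateFinset (0 : V → ℝ) B ψ) := by
    classical
    simp only [Set.indicator_apply, Set.mem_preimage, weight_eq, mul_ite, mul_zero]
  have measurable_add : Measurable (h + · : (V → ℝ) → V → ℝ) := by fun_prop
  rw [Measure.smul_apply, Measure.map_apply measurable_add hE, smul_eq_mul,
    gibbsMeasure_apply hQ _ _ hE, gibbsMeasure_apply hQ _ _ (measurable_add hE)]
  calc (∫⋯∫⁻_B, E.indicator (gibbsWeight Q) ∂fun _ ↦ volume) s
      = ∫⁻ ψ : B → ℝ, E.indicator (gibbsWeight Q)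
          (h + Function.updateFinset (0 : V → ℝ) B (ψ - fun b : B ↦ h b)) := by
        simp only [← update_eq]
        rfl
    _ = ∫⁻ ψ : B → ℝ, gibbsWeight Q h *
          ((h + ·) ⁻¹' E).indicator (gibbsWeight Q) (Function.updateFinset (0 : V → ℝ) B ψ) := by
        simp only [← shifted_indicator]
        exact lintegral_sub_right_eq_self
          (fun ψ ↦ E.indicator (gibbsWeight Q) (h + Function.updateFinset (0 : V → ℝ) B ψ)) _
    _ = _ := lintegral_const_mul' _ _ ENNReal.ofReal_ne_top

lemma gibbsMeasure_univ_eq_mul (hQ : Measurable Q) (hhs : Set.EqOn h s (↑B)ᶜ)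
    (hh : IsHarmonicOn Q B h) :
    gibbsMeasure Q B s Set.univ = gibbsWeight Q h * gibbsMeasure Q B 0 Set.univ := by
  rw [gibbsMeasure_eq_map_add hQ hhs hh, Measure.smul_apply,
    Measure.map_apply (by fun_prop) MeasurableSet.univ, Set.preimage_univ, smul_eq_mul]

lemma gibbsField_eq_map_add (hQ : Measurable Q) (hhs : Set.EqOn h s (↑B)ᶜ)
    (hh : IsHarmonicOn Q B h) :
    gibbsField Q B s = (gibbsField Q B 0).map (h + ·) := by
  have weight_ne_top : gibbsWeight Q h ≠ ⊤ := ENNReal.ofReal_ne_top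
  rw [gibbsField, gibbsField, gibbsMeasure_univ_eq_mul hQ hhs hh, gibbsMeasure_eq_map_add hQ hhs hh,
    ENNReal.mul_inv (.inl (gibbsWeight_ne_zero Q h)) (.inl weight_ne_top),
    Measure.map_smul, smul_smul, mul_right_comm,
    ENNReal.inv_mul_cancel (gibbsWeight_ne_zero Q h) weight_ne_top, one_mul]

lemma map_eval_gibbsMeasure_insert (hQ : Measurable Q) {x : V} (hx : x ∉ B) {u : V → ℝ}
    (hu : Set.EqOn u (Pi.single x 1) (↑B)ᶜ) (hharm : IsHarmonicOn Q B u) (hpos : 0 < Q u) :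
    (gibbsMeasure Q (insert x B) 0).map (Function.eval x) =
      (gibbsMeasure Q B 0 Set.univ * ENNReal.ofReal √(π / Q u)) •
        gaussianReal 0 (2 * Q u).toNNReal⁻¹ := by
  set Z := gibbsMeasure Q B 0 Set.univ
  have variance_ne_zero : (2 * Q u).toNNReal⁻¹ ≠ 0 := by
    simpa using hpos
  ext E hE
  have conditioned (t : ℝ) : gibbsMeasure Q B (Function.update 0 x t) (Function.eval x ⁻¹' E) =
      E.indicator (fun t ↦ Z * ENNReal.ofReal √(π / Q u) *
        gaussianPDF 0 (2 * Q u).toNNReal⁻¹ t) t := by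
    have eval_eq := gibbsMeasure_ae_eq_boundary Q (Function.update 0 x t) hx
    rw [Function.update_self] at eval_eq
    by_cases ht : t ∈ E
    · have smul_eq : Set.EqOn (t • u) (Function.update 0 x t) (↑B)ᶜ := fun y hy ↦ by
        simp [hu hy, Function.update_apply, Pi.single_apply]
      have event_eq : (Function.eval x ⁻¹' E : Set (V → ℝ))
          =ᵐ[gibbsMeasure Q B (Function.update 0 x t)] Set.univ :=
        Filter.eventuallyEq_univ.2 (eval_eq.mono fun φ hφ ↦ by simpa [hφ] using ht)
      rw [measure_congr event_eq, gibbsMeasure_univ_eq_mul hQ smul_eq (hharm.const_smul t),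
        Set.indicator_of_mem ht, gibbsWeight_smul_eq_mul_gaussianPDF hpos]
      ring
    · rw [Set.indicator_of_notMem ht]
      exact measure_eq_zero_iff_ae_notMem.2 (eval_eq.mono fun φ hφ ↦ by simpa [hφ] using ht)
  rw [Measure.map_apply (measurable_pi_apply x) hE,
    gibbsMeasure_insert_apply hQ hx 0 (measurable_pi_apply x hE)]
  simp only [conditioned]
  rw [lintegral_indicator hE, lintegral_const_mul _ (measurable_gaussianPDF _ _),
    Measure.smul_apply, gaussianReal_apply 0 variance_ne_zero, smul_eq_mul]

lemma gibbsMeasure_insert_univ (hQ : Measurable Q) {x : V} (hx : x ∉ B) {u : V → ℝ}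
    (hu : Set.EqOn u (Pi.single x 1) (↑B)ᶜ) (hharm : IsHarmonicOn Q B u) (hpos : 0 < Q u) :
    gibbsMeasure Q (insert x B) 0 Set.univ =
      gibbsMeasure Q B 0 Set.univ * ENNReal.ofReal √(π / Q u) := by
  calc gibbsMeasure Q (insert x B) 0 Set.univ
      = (gibbsMeasure Q (insert x B) 0).map (Function.eval x) Set.univ := by
        rw [Measure.map_apply (measurable_pi_apply x) MeasurableSet.univ, Set.preimage_univ]
    _ = gibbsMeasure Q B 0 Set.univ * ENNReal.ofReal √(π / Q u) := by
        rw [map_eval_gibbsMeasure_insert hQ hx hu hharm hpos, Measure.smul_apply,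
          measure_univ (μ := gaussianReal _ _), smul_eq_mul, mul_one]

lemma PosDefOn.exists_harmonic_unit (hB : PosDefOn Q (insert x B)) (hx : x ∉ B) :
    ∃ u : V → ℝ, Function.support u ⊆ ↑(insert x B) ∧ u x = 1 ∧ 0 < Q u ∧
      Set.EqOn u (Pi.single x 1) (↑B)ᶜ ∧ IsHarmonicOn Q B u := by
  obtain ⟨u, hu, hharm⟩ := (hB.mono (subset_insert x B)).exists_harmonic_extension (Pi.single x 1)
  have support_u : Function.support u ⊆ ↑(insert x B) :=
    Function.support_subset_iff'.2 fun y hy ↦ by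
      rw [coe_insert, Set.mem_insert_iff, not_or] at hy
      rw [hu hy.2, Pi.single_eq_of_ne hy.1]
  have u_x : u x = 1 := by rw [hu hx, Pi.single_eq_same]
  have u_ne : u ≠ 0 := fun h0 ↦ one_ne_zero (u_x.symm.trans (congrFun h0 x))
  exact ⟨u, support_u, u_x, hB u support_u u_ne, hu, hharm⟩

lemma gibbsMeasure_zero_univ_ne (hQ : Measurable Q) (hB : PosDefOn Q B) :
    gibbsMeasure Q B 0 Set.univ ≠ 0 ∧ gibbsMeasure Q B 0 Set.univ ≠ ⊤ := by
  induction B using Finset.induction_on with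
  | empty =>
    rw [gibbsMeasure_apply hQ _ _ MeasurableSet.univ, lmarginal_empty, Set.indicator_univ]
    exact ⟨gibbsWeight_ne_zero Q 0, ENNReal.ofReal_ne_top⟩
  | insert x B hx ih =>
    obtain ⟨u, -, -, hpos, hu, hharm⟩ := hB.exists_harmonic_unit hx
    obtain ⟨ne_zero, ne_top⟩ := ih (hB.mono (subset_insert x B))
    rw [gibbsMeasure_insert_univ hQ hx hu hharm hpos]
    refine ⟨mul_ne_zero ne_zero ?_, ENNReal.mul_ne_top ne_top ENNReal.ofReal_ne_top⟩
    simpa using by positivity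

lemma exists_map_eval_gibbsField_zero (hQ : Measurable Q) (hB : PosDefOn Q B) {x : V} (hx : x ∈ B) :
    ∃ u : V → ℝ, Function.support u ⊆ B ∧ u x = 1 ∧
      (gibbsField Q B 0).map (Function.eval x) = gaussianReal 0 (2 * Q u).toNNReal⁻¹ := by
  obtain ⟨B, hxB, rfl⟩ : ∃ C, x ∉ C ∧ insert x C = B :=
    ⟨B.erase x, notMem_erase x B, insert_erase hx⟩
  obtain ⟨u, support_u, u_x, hpos, hu, hharm⟩ := hB.exists_harmonic_unit hxB
  refine ⟨u, support_u, u_x, ?_⟩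
  obtain ⟨ne_zero, ne_top⟩ := gibbsMeasure_zero_univ_ne hQ hB
  rw [gibbsField, Measure.map_smul, map_eval_gibbsMeasure_insert hQ hxB hu hharm hpos,
    ← gibbsMeasure_insert_univ hQ hxB hu hharm hpos, smul_smul,
    ENNReal.inv_mul_cancel ne_zero ne_top, one_smul]

lemma gibbsField_apply (Q : QuadraticForm ℝ (V → ℝ)) (B : Finset V) (s : V → ℝ) (E : Set (V → ℝ)) :
    gibbsField Q B s E = (gibbsMeasure Q B s Set.univ)⁻¹ * gibbsMeasure Q B s E := rfl

lemma gibbsField_zero_Icc_le (hQ : Measurable Q) (hM : IsMarkovian Q) (hB : PosDefOn Q B) {a : ℝ}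
    (ha : 0 ≤ a) (hs : ∀ y ∉ B, s y ∈ Set.Icc 0 a) {x : V} (hx : x ∈ B) :
    gibbsField Q B 0 (Function.eval x ⁻¹' Set.Icc 0 a) ≤
      gibbsField Q B s (Function.eval x ⁻¹' Set.Icc 0 a) := by
  obtain ⟨h, hhs, hh⟩ := hB.exists_harmonic_extension s
  have h_mem : h x ∈ Set.Icc 0 a :=
    hh.mem_Icc hM hB ⟨le_rfl, ha⟩ (fun y hy ↦ (hhs hy).symm ▸ hs y hy) x
  obtain ⟨u, -, -, marginal⟩ := exists_map_eval_gibbsField_zero hQ hB hx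
  have shifted_marginal : (gibbsField Q B s).map (Function.eval x) =
      gaussianReal (h x) (2 * Q u).toNNReal⁻¹ := by
    rw [← zero_add (h x), ← gaussianReal_map_const_add, ← marginal, gibbsField_eq_map_add hQ hhs hh,
      Measure.map_map (by fun_prop) (by fun_prop), Measure.map_map (by fun_prop) (by fun_prop)]
    rfl
  have measurable_eval : Measurable (Function.eval x : (V → ℝ) → ℝ) := measurable_pi_apply x
  rw [← Measure.map_apply measurable_eval measurableSet_Icc,
    ← Measure.map_apply measurable_eval measurableSet_Icc, marginal, shifted_marginal]
  exact gaussianReal_Icc_le_shift _ h_mem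

lemma gibbsField_mul_gibbsMeasure_pi_le (hQ : Measurable Q) (hM : IsMarkovian Q)
    (hB : PosDefOn Q B) (hSB : Disjoint S B) {a : ℝ} (ha : 0 ≤ a)
    (hs : ∀ y ∉ S ∪ B, s y ∈ Set.Icc 0 a) {x : V} (hx : x ∈ B) :
    gibbsField Q B 0 (Function.eval x ⁻¹' Set.Icc 0 a) *
        gibbsMeasure Q B s ((S : Set V).pi fun _ ↦ Set.Icc 0 a) ≤
      gibbsMeasure Q B s ((↑(insert x S) : Set V).pi fun _ ↦ Set.Icc 0 a) := by
  have ae_boundary : ∀ᵐ φ ∂gibbsMeasure Q B s, ∀ y ∈ S, φ y = s y :=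
    (Finset.eventually_all S).2 fun y hy ↦
      gibbsMeasure_ae_eq_boundary Q s (disjoint_left.1 hSB hy)
  by_cases confined : ∀ y ∈ S, s y ∈ Set.Icc 0 a
  · obtain ⟨h, hhs, hh⟩ := hB.exists_harmonic_extension s
    have mass_ne_zero : gibbsMeasure Q B s Set.univ ≠ 0 := by
      rw [gibbsMeasure_univ_eq_mul hQ hhs hh]
      exact mul_ne_zero (gibbsWeight_ne_zero Q h) (gibbsMeasure_zero_univ_ne hQ hB).1
    have mass_ne_top : gibbsMeasure Q B s Set.univ ≠ ⊤ := by
      rw [gibbsMeasure_univ_eq_mul hQ hhs hh]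
      exact ENNReal.mul_ne_top ENNReal.ofReal_ne_top (gibbsMeasure_zero_univ_ne hQ hB).2
    have event_ae_eq : ((↑(insert x S) : Set V).pi fun _ ↦ Set.Icc 0 a)
        =ᵐ[gibbsMeasure Q B s] Function.eval x ⁻¹' Set.Icc 0 a := by
      refine Filter.eventuallyEq_set.2 (ae_boundary.mono fun φ hφ ↦ ?_)
      rw [coe_insert, Set.insert_pi]
      exact and_iff_left fun y hy ↦ hφ y hy ▸ confined y hy
    have boundary_mem (y : V) (hy : y ∉ B) : s y ∈ Set.Icc 0 a := by
      by_cases hyS : y ∈ S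
      · exact confined y hyS
      · exact hs y (by simp [hy, hyS])
    calc _ ≤ gibbsField Q B s (Function.eval x ⁻¹' Set.Icc 0 a) * gibbsMeasure Q B s Set.univ :=
          mul_le_mul' (gibbsField_zero_Icc_le hQ hM hB ha boundary_mem hx)
            (measure_mono (Set.subset_univ _))
      _ = gibbsMeasure Q B s (Function.eval x ⁻¹' Set.Icc 0 a) := by
          rw [gibbsField_apply, mul_right_comm,
            ENNReal.inv_mul_cancel mass_ne_zero mass_ne_top, one_mul]
      _ = _ := measure_congr event_ae_eq.symm
  · have event_null : gibbsMeasure Q B s ((S : Set V).pi fun _ ↦ Set.Icc 0 a) = 0 :=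
      measure_eq_zero_iff_ae_notMem.2 <| ae_boundary.mono fun φ hφ hmem ↦
        confined fun y hy ↦ hφ y hy ▸ hmem y hy
    rw [event_null, mul_zero]
    exact zero_le

lemma gibbsField_mul_pi_le_pi_insert {W : Finset V} (hQ : Measurable Q) (hM : IsMarkovian Q)
    (hW : PosDefOn Q W) (hSW : S ⊆ W) {a : ℝ} (ha : 0 ≤ a) {x : V} (hx : x ∈ W \ S) :
    gibbsField Q (W \ S) 0 (Function.eval x ⁻¹' Set.Icc 0 a) *
        gibbsField Q W 0 ((S : Set V).pi fun _ ↦ Set.Icc 0 a) ≤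
      gibbsField Q W 0 ((↑(insert x S) : Set V).pi fun _ ↦ Set.Icc 0 a) := by
  have decomposition {E : Set (V → ℝ)} (hE : MeasurableSet E) : gibbsMeasure Q W 0 E =
      ∫⁻ σ : S → ℝ, gibbsMeasure Q (W \ S) (Function.updateFinset 0 S σ) E := by
    rw [← gibbsMeasure_union_apply hQ disjoint_sdiff 0 hE, union_sdiff_of_subset hSW]
  rw [gibbsField_apply Q W, gibbsField_apply Q W, mul_left_comm,
    decomposition (measurableSet_pi_Icc _ a), decomposition (measurableSet_pi_Icc _ a)]
  gcongr
  refine (lintegral_const_mul_le _ _).trans (lintegral_mono fun σ ↦ ?_)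
  refine gibbsField_mul_gibbsMeasure_pi_le hQ hM (hW.mono sdiff_subset) disjoint_sdiff ha
    (fun y hy ↦ ?_) hx
  rw [Function.updateFinset, dif_neg fun hyS ↦ hy (mem_union_left _ hyS)]
  exact ⟨le_rfl, ha⟩

lemma prod_gibbsField_le_gibbsField_pi {ι : Type*} [LinearOrder ι] {W : Finset V}
    (hQ : Measurable Q) (hM : IsMarkovian Q) (hW : PosDefOn Q W) {a : ℝ} (ha : 0 ≤ a) (I : Finset ι)
    {x : ι → V} (hx : Set.InjOn x I) (hxW : Set.MapsTo x I W) :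
    ∏ i ∈ I, gibbsField Q (W \ (I.filter (i < ·)).image x) 0 (Function.eval (x i) ⁻¹' Set.Icc 0 a) ≤
      gibbsField Q W 0 ((↑(I.image x) : Set V).pi fun _ ↦ Set.Icc 0 a) := by
  induction I using Finset.induction_on_min with
  | empty =>
    obtain ⟨ne_zero, ne_top⟩ := gibbsMeasure_zero_univ_ne hQ hW
    rw [prod_empty, image_empty, coe_empty, Set.empty_pi, gibbsField_apply,
      ENNReal.inv_mul_cancel ne_zero ne_top]
  | insert i I hi ih =>
    have i_notMem : i ∉ I := fun h ↦ (hi i h).false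
    have filter_self : (insert i I).filter (i < ·) = I := by
      rw [filter_insert, if_neg (lt_irrefl i), filter_true_of_mem hi]
    have filter_later (j : ι) (hj : j ∈ I) : (insert i I).filter (j < ·) = I.filter (j < ·) := by
      rw [filter_insert, if_neg (hi j hj).asymm]
    have x_notMem : x i ∉ I.image x := by
      rw [← mem_coe, coe_image, hx.mem_image_iff (by simp) (by simp)]
      exact i_notMem
    rw [coe_insert] at hx hxW
    rw [prod_insert i_notMem, filter_self, prod_congr rfl fun j hj ↦ by rw [filter_later j hj],
      image_insert]
    refine (mul_le_mul_right (ih (hx.mono (Set.subset_insert i I))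
      (hxW.mono_left (Set.subset_insert i I))) _).trans ?_
    exact gibbsField_mul_pi_le_pi_insert hQ hM hW
      (image_subset_iff.2 fun j hj ↦ hxW (Set.mem_insert_of_mem i hj)) ha
      (mem_sdiff.2 ⟨hxW (Set.mem_insert i I), x_notMem⟩)

lemma le_gibbsField_zero_Icc (hQ : Measurable Q) {v : ℝ≥0} (hB : VarianceBoundedOn Q B v)
    {x : V} (hx : x ∈ B) (a : ℝ) {b : ℝ} (hb : 0 ≤ b) :
    ENNReal.ofReal (gaussianPDFReal 0 v b * min b a) ≤
      gibbsField Q B 0 (Function.eval x ⁻¹' Set.Icc 0 a) := by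
  obtain ⟨u, hu, u_x, marginal⟩ := exists_map_eval_gibbsField_zero hQ hB.posDefOn hx
  rw [← Measure.map_apply (measurable_pi_apply x) measurableSet_Icc, marginal]
  refine le_gaussianReal_Icc ?_ a hb
  have one_le : 1 ≤ v * (2 * Q u) := by
    simpa only [u_x, one_pow, mul_comm (2 : ℝ), mul_assoc] using hB u hu x
  have energy_pos : 0 < 2 * Q u := pos_of_mul_pos_right (one_pos.trans_le one_le) v.2
  rw [← NNReal.coe_le_coe, NNReal.coe_inv, Real.coe_toNNReal _ energy_pos.le]
  exact (inv_le_iff_one_le_mul₀ energy_pos).2 one_le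

end GibbsMeasure

section UrnFlow

variable {ι : Type*} [Fintype ι] [DecidableEq ι]

lemma sum_piAntidiag_add_single (n : ℕ) (e : ι) (g : (ι → ℕ) → ℝ) :
    ∑ p ∈ piAntidiag univ n, (p e + 1) * g (p + Pi.single e 1) =
      ∑ q ∈ piAntidiag univ (n + 1), q e * g q := by
  have sum_add_single (p : ι → ℕ) : ∑ i, (p + Pi.single e 1 : ι → ℕ) i = ∑ i, p i + 1 := by
    simp [sum_add_distrib]
  have single_le {q : ι → ℕ} (hq : q e ≠ 0) : Pi.single e 1 ≤ q :=
    update_le_iff.2 ⟨Nat.one_le_iff_ne_zero.2 hq, fun _ _ ↦ zero_le⟩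
  have vanish (q : ι → ℕ) (hq : ¬ q e ≠ 0) : (q e : ℝ) * g q = 0 := by simp [not_not.1 hq]
  rw [← sum_filter_of_ne fun q _ hq hq' ↦ hq (vanish q (not_not.2 hq'))]
  refine sum_nbij' (· + Pi.single e 1) (· - Pi.single e 1) (fun p hp ↦ ?_) (fun q hq ↦ ?_)
    (fun p _ ↦ add_tsub_cancel_right p _) (fun q hq ↦ ?_) (fun p _ ↦ ?_)
  · simp_all [sum_add_distrib]
  · obtain ⟨hq, q_e⟩ := mem_filter.1 hq
    have := sum_add_single (q - Pi.single e 1)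
    rw [tsub_add_cancel_of_le (single_le q_e)] at this
    simp_all
  · exact tsub_add_cancel_of_le (single_le (mem_filter.1 hq).2)
  · simp

lemma sum_piAntidiag_sum_add_single (n : ℕ) (g : (ι → ℕ) → ℝ) :
    ∑ p ∈ piAntidiag univ n, ∑ e, (p e + 1) * g (p + Pi.single e 1) =
      (n + 1) * ∑ q ∈ piAntidiag (univ : Finset ι) (n + 1), g q := by
  rw [sum_comm]
  simp only [sum_piAntidiag_add_single]
  rw [sum_comm, mul_sum]
  refine sum_congr rfl fun q hq ↦ ?_
  rw [← sum_mul, ← Nat.cast_sum, (mem_piAntidiag.1 hq).1]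
  push_cast
  rfl

lemma sum_add_one_of_mem_piAntidiag {n : ℕ} {p : ι → ℕ} (hp : p ∈ piAntidiag univ n) :
    ∑ e, ((p e : ℝ) + 1) = n + Fintype.card ι := by
  rw [sum_add_distrib, ← Nat.cast_sum, (mem_piAntidiag.1 hp).1]
  simp

lemma card_piAntidiag_univ_succ (n : ℕ) :
    (n + 1) * (#(piAntidiag (univ : Finset ι) (n + 1)) : ℝ) =
      (n + Fintype.card ι) * #(piAntidiag (univ : Finset ι) n) := by
  have count := sum_piAntidiag_sum_add_single (ι := ι) n fun _ ↦ 1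
  simp only [mul_one, sum_const, nsmul_eq_mul] at count
  rw [← count, sum_congr rfl fun p hp ↦ sum_add_one_of_mem_piAntidiag hp, sum_const, nsmul_eq_mul,
    mul_comm]

lemma card_piAntidiag_univ_ge (hι : 3 ≤ Fintype.card ι) (n : ℕ) :
    ((n : ℝ) + 1) * (n + 2) ≤ 2 * #(piAntidiag (univ : Finset ι) n) := by
  have hι : (3 : ℝ) ≤ Fintype.card ι := by exact_mod_cast hι
  induction n with
  | zero => simp
  | succ n ih =>
    have pos : (0 : ℝ) < n + 1 := by positivity
    refine le_of_mul_le_mul_left ?_ pos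
    rw [mul_left_comm _ (2 : ℝ), card_piAntidiag_univ_succ]
    push_cast
    nlinarith [mul_le_mul hι ih (by positivity) (by positivity)]

lemma sum_inv_card_piAntidiag_le (hι : 3 ≤ Fintype.card ι) (N : ℕ) :
    ∑ n ∈ range N, (#(piAntidiag (univ : Finset ι) n) : ℝ)⁻¹ ≤ 2 := by
  calc ∑ n ∈ range N, (#(piAntidiag (univ : Finset ι) n) : ℝ)⁻¹
      ≤ ∑ n ∈ range N, (2 / ((n : ℝ) + 1) - 2 / ((n + 1 : ℕ) + 1)) := by
        refine sum_le_sum fun n _ ↦ ?_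
        have card_ge := card_piAntidiag_univ_ge hι n
        have inv_le : (#(piAntidiag (univ : Finset ι) n) : ℝ)⁻¹ ≤ 2 / ((n + 1) * (n + 2)) := by
          rw [inv_le_comm₀ (by nlinarith) (by positivity), inv_div]
          linarith
        refine inv_le.trans_eq ?_
        push_cast
        field_simp
        ring
    _ = 2 - 2 / (N + 1) := by
        rw [sum_range_sub']
        simp
    _ ≤ 2 := sub_le_self _ (by positivity)

/-- The flow of a Pólya urn with one initial ball of each colour in `ι`: the probability that after
`n` draws the urn has produced `p e` balls of each colour `e`, and the next draw has colour `e`. -/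
noncomputable def urnFlow (n : ℕ) (p : ι → ℕ) (e : ι) : ℝ :=
  (p e + 1) / ((n + Fintype.card ι) * #(piAntidiag (univ : Finset ι) n))

lemma urnFlow_nonneg (n : ℕ) (p : ι → ℕ) (e : ι) : 0 ≤ urnFlow n p e := by
  unfold urnFlow
  positivity

variable [Nonempty ι]

lemma card_piAntidiag_univ_pos (n : ℕ) : (0 : ℝ) < #(piAntidiag (univ : Finset ι) n) := by
  induction n with
  | zero => simp
  | succ n ih =>
    have product_pos : (0 : ℝ) < (n + 1) * #(piAntidiag (univ : Finset ι) (n + 1)) := by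
      rw [card_piAntidiag_univ_succ]
      positivity
    exact pos_of_mul_pos_right product_pos (by positivity)

lemma sum_urnFlow {n : ℕ} {p : ι → ℕ} (hp : p ∈ piAntidiag univ n) :
    ∑ e, urnFlow n p e = (#(piAntidiag (univ : Finset ι) n) : ℝ)⁻¹ := by
  simp only [urnFlow]
  rw [← sum_div, sum_add_one_of_mem_piAntidiag hp, div_mul_cancel_left₀ (by positivity)]

lemma sum_sum_urnFlow (n : ℕ) :
    ∑ p ∈ piAntidiag (univ : Finset ι) n, ∑ e, urnFlow n p e = 1 := by
  rw [sum_congr rfl fun p hp ↦ sum_urnFlow hp, sum_const, nsmul_eq_mul,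
    mul_inv_cancel₀ (card_piAntidiag_univ_pos n).ne']

lemma urnFlow_le {n : ℕ} {p : ι → ℕ} (hp : p ∈ piAntidiag univ n) (e : ι) :
    urnFlow n p e ≤ (#(piAntidiag (univ : Finset ι) n) : ℝ)⁻¹ :=
  (sum_urnFlow hp) ▸ single_le_sum (fun i _ ↦ urnFlow_nonneg n p i) (mem_univ e)

lemma sum_urnFlow_mul_gradient (n : ℕ) (u : (ι → ℕ) → ℝ) :
    ∑ p ∈ piAntidiag univ n, ∑ e, urnFlow n p e * (u p - u (p + Pi.single e 1)) =
      𝔼 p ∈ piAntidiag univ n, u p - 𝔼 p ∈ piAntidiag univ (n + 1), u p := by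
  have outflow : ∑ p ∈ piAntidiag univ n, ∑ e, urnFlow n p e * u p =
      𝔼 p ∈ piAntidiag univ n, u p := by
    simp only [← sum_mul]
    rw [sum_congr rfl fun p hp ↦ by rw [sum_urnFlow hp], ← mul_sum, expect_eq_sum_div_card,
      div_eq_inv_mul]
  have inflow : ∑ p ∈ piAntidiag univ n, ∑ e, urnFlow n p e * u (p + Pi.single e 1) =
      𝔼 p ∈ piAntidiag univ (n + 1), u p := by
    simp only [urnFlow, div_mul_eq_mul_div, ← sum_div]
    rw [sum_piAntidiag_sum_add_single, ← card_piAntidiag_univ_succ, expect_eq_sum_div_card,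
      mul_div_mul_left _ _ (by positivity)]
  simp only [mul_sub, sum_sub_distrib, outflow, inflow]

lemma sq_expect_sub_expect_succ_le (n : ℕ) (u : (ι → ℕ) → ℝ) :
    (𝔼 p ∈ piAntidiag univ n, u p - 𝔼 p ∈ piAntidiag univ (n + 1), u p) ^ 2 ≤
      (#(piAntidiag (univ : Finset ι) n) : ℝ)⁻¹ *
        ∑ p ∈ piAntidiag univ n, ∑ e, (u p - u (p + Pi.single e 1)) ^ 2 := by
  let L := piAntidiag (univ : Finset ι) n ×ˢ (univ : Finset ι)
  calc (𝔼 p ∈ piAntidiag univ n, u p - 𝔼 p ∈ piAntidiag univ (n + 1), u p) ^ 2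
      = (∑ q ∈ L, urnFlow n q.1 q.2 * (u q.1 - u (q.1 + Pi.single q.2 1))) ^ 2 := by
        rw [← sum_urnFlow_mul_gradient, sum_product]
    _ ≤ (∑ q ∈ L, urnFlow n q.1 q.2) *
          ∑ q ∈ L, urnFlow n q.1 q.2 * (u q.1 - u (q.1 + Pi.single q.2 1)) ^ 2 :=
        sum_sq_le_sum_mul_sum_of_sq_le_mul _ (fun q _ ↦ urnFlow_nonneg _ _ _)
          (fun q _ ↦ mul_nonneg (urnFlow_nonneg _ _ _) (sq_nonneg _)) fun q _ ↦ by
            rw [mul_pow, sq (urnFlow _ _ _), mul_assoc]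
    _ = ∑ q ∈ L, urnFlow n q.1 q.2 * (u q.1 - u (q.1 + Pi.single q.2 1)) ^ 2 := by
        rw [sum_product, sum_sum_urnFlow, one_mul]
    _ ≤ ∑ q ∈ L, (#(piAntidiag (univ : Finset ι) n) : ℝ)⁻¹ *
          (u q.1 - u (q.1 + Pi.single q.2 1)) ^ 2 := by
        gcongr with q hq
        exact urnFlow_le (mem_product.1 hq).1 q.2
    _ = _ := by rw [← mul_sum, sum_product]

lemma sq_apply_zero_le_mul_energy {u : (ι → ℕ) → ℝ} {N : ℕ}
    (hu : ∀ p ∈ piAntidiag univ N, u p = 0) :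
    u 0 ^ 2 ≤ (∑ n ∈ range N, (#(piAntidiag (univ : Finset ι) n) : ℝ)⁻¹) *
      ∑ n ∈ range N, ∑ p ∈ piAntidiag univ n, ∑ e, (u p - u (p + Pi.single e 1)) ^ 2 := by
  have telescope : ∑ n ∈ range N,
      (𝔼 p ∈ piAntidiag univ n, u p - 𝔼 p ∈ piAntidiag univ (n + 1), u p) = u 0 := by
    rw [sum_range_sub' fun n ↦ 𝔼 p ∈ piAntidiag univ n, u p, piAntidiag_zero, expect_singleton,
      expect_congr rfl hu, expect_const_zero, sub_zero]
  rw [← telescope]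
  exact sum_sq_le_sum_mul_sum_of_sq_le_mul _ (fun _ _ ↦ by positivity) (fun _ _ ↦ by positivity)
    fun n _ ↦ sq_expect_sub_expect_succ_le n u

end UrnFlow

section Lattice

variable {d : ℕ} {B W : Finset (Fin d → ℤ)} {φ : (Fin d → ℤ) → ℝ}

lemma mem_nbrs_comm {x y : Fin d → ℤ} : y ∈ nbrs d x ↔ x ∈ nbrs d y := by
  suffices ∀ {x y : Fin d → ℤ}, y ∈ nbrs d x → x ∈ nbrs d y from ⟨this, this⟩
  intro x y hy
  obtain ⟨⟨e, forward⟩, -, rfl⟩ := mem_image.1 hy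
  refine mem_image.2 ⟨(e, !forward), mem_univ _, ?_⟩
  cases forward <;> simp

lemma add_single_mem_nbrs (x : Fin d → ℤ) (e : Fin d) : x + Pi.single e 1 ∈ nbrs d x := by
  refine mem_image.2 ⟨(e, true), mem_univ _, funext fun i ↦ ?_⟩
  rcases eq_or_ne i e with rfl | hi <;> simp [*]

lemma mem_union_bdry_of_mem_nbrs {x y : Fin d → ℤ} (hx : x ∈ W) (hy : y ∈ nbrs d x) :
    y ∈ W ∪ bdry d W := by
  rw [bdry, union_sdiff_self_eq_union]
  exact mem_union_right _ (mem_biUnion.2 ⟨x, hx, hy⟩)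

lemma ham_eq_sum_nbrs (hφ : Function.support φ ⊆ W) {C : Finset (Fin d → ℤ)}
    (hC : W ∪ bdry d W ⊆ C) :
    ham d W φ = (1 / (8 * d)) * ∑ x ∈ C, ∑ y ∈ nbrs d x, (φ x - φ y) ^ 2 := by
  have gradient_zero {x y : Fin d → ℤ} (hx : x ∉ W ∪ bdry d W) (hxy : y ∈ nbrs d x) :
      φ x = 0 ∧ φ y = 0 := by
    rw [Function.support_subset_iff'] at hφ
    exact ⟨hφ x fun h ↦ hx (mem_union_left _ h),
      hφ y fun h ↦ hx (mem_union_bdry_of_mem_nbrs h (mem_nbrs_comm.1 hxy))⟩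
  rw [ham, ← sum_subset hC fun x _ hx ↦ sum_eq_zero fun y hy ↦ by
    rw [(gradient_zero hx hy).1, (gradient_zero hx hy).2, sub_self, sq, zero_mul]]
  congr 1
  refine sum_congr rfl fun x _ ↦ ?_
  rw [← sum_filter]
  refine sum_subset (fun y hy ↦ (mem_filter.1 hy).2) fun y hy hy' ↦ ?_
  have y_notMem : y ∉ W ∪ bdry d W := fun h ↦ hy' (mem_filter.2 ⟨h, hy⟩)
  rw [(gradient_zero y_notMem (mem_nbrs_comm.1 hy)).1,
    (gradient_zero y_notMem (mem_nbrs_comm.1 hy)).2, sub_self, sq, zero_mul]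

lemma ham_eq_of_subset (hφ : Function.support φ ⊆ B) (hBW : B ⊆ W) : ham d B φ = ham d W φ := by
  rw [ham_eq_sum_nbrs hφ subset_union_left,
    ham_eq_sum_nbrs (hφ.trans (coe_subset.2 hBW)) subset_union_right]

lemma sum_forward_gradient_le_ham [NeZero d] (hφ : Function.support φ ⊆ W)
    (P : Finset (Fin d → ℤ)) :
    ∑ z ∈ P, ∑ e, (φ z - φ (z + Pi.single e 1)) ^ 2 ≤ 8 * d * ham d W φ := by
  have d_ne : (d : ℝ) ≠ 0 := NeZero.ne _
  have shift_injective (z : Fin d → ℤ) : Function.Injective fun e ↦ z + Pi.single e (1 : ℤ) :=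
    fun e e' h ↦ by
      simpa [Pi.single_apply] using congrFun (add_left_cancel h) e
  calc ∑ z ∈ P, ∑ e, (φ z - φ (z + Pi.single e 1)) ^ 2
      ≤ ∑ z ∈ P, ∑ y ∈ nbrs d z, (φ z - φ y) ^ 2 := by
        refine sum_le_sum fun z _ ↦ ?_
        rw [← sum_image (f := fun y ↦ (φ z - φ y) ^ 2) (shift_injective z).injOn]
        refine sum_le_sum_of_subset_of_nonneg ?_ fun _ _ _ ↦ sq_nonneg _
        exact image_subset_iff.2 fun e _ ↦ add_single_mem_nbrs z e
    _ ≤ ∑ z ∈ P ∪ (W ∪ bdry d W), ∑ y ∈ nbrs d z, (φ z - φ y) ^ 2 :=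
        sum_le_sum_of_subset_of_nonneg subset_union_left fun _ _ _ ↦ by positivity
    _ = 8 * d * ham d W φ := by
        rw [ham_eq_sum_nbrs hφ subset_union_right]
        field_simp

lemma exists_piAntidiag_translate_disjoint (W : Finset (Fin d → ℤ)) (x : Fin d → ℤ) :
    ∃ N : ℕ, ∀ p ∈ piAntidiag univ N, (x + fun e ↦ (p e : ℤ)) ∉ W := by
  obtain ⟨N, hN⟩ := Infinite.exists_notMem_finset (W.image fun y ↦ (∑ e, (y e - x e)).toNat)
  refine ⟨N, fun p hp hW ↦ hN (mem_image.2 ⟨_, hW, ?_⟩)⟩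
  simp only [Pi.add_apply, add_sub_cancel_left]
  rw [← Nat.cast_sum, (mem_piAntidiag.1 hp).1, Int.toNat_natCast]

lemma sq_apply_le_ham (hd : 3 ≤ d) (hφ : Function.support φ ⊆ W) (x : Fin d → ℤ) :
    φ x ^ 2 ≤ 2 * (8 * d * ham d W φ) := by
  have : NeZero d := ⟨by lia⟩
  let embed (p : Fin d → ℕ) : Fin d → ℤ := x + fun e ↦ (p e : ℤ)
  have embed_injective : Function.Injective embed := fun p q h ↦
    funext fun e ↦ Nat.cast_injective (congrFun (add_left_cancel h) e)
  have embed_add_single (p : Fin d → ℕ) (e : Fin d) :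
      embed (p + Pi.single e 1) = embed p + Pi.single e 1 := by
    ext i
    rcases eq_or_ne i e with rfl | hi <;> simp [embed, add_assoc, *]
  obtain ⟨N, hN⟩ := exists_piAntidiag_translate_disjoint W x
  have layers_disjoint : (range N : Set ℕ).PairwiseDisjoint (piAntidiag (univ : Finset (Fin d))) :=
    fun m _ n _ hmn ↦ disjoint_left.2 fun p hm hn ↦
      hmn ((mem_piAntidiag.1 hm).1.symm.trans (mem_piAntidiag.1 hn).1)
  have energy_le : ∑ n ∈ range N, ∑ p ∈ piAntidiag univ n,
      ∑ e, ((φ ∘ embed) p - (φ ∘ embed) (p + Pi.single e 1)) ^ 2 ≤ 8 * d * ham d W φ := by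
    rw [← sum_biUnion layers_disjoint]
    refine le_of_eq_of_le ?_ (sum_forward_gradient_le_ham hφ
      (((range N).biUnion (piAntidiag univ)).image embed))
    rw [sum_image embed_injective.injOn]
    simp only [Function.comp_apply, embed_add_single]
  calc φ x ^ 2 = (φ ∘ embed) 0 ^ 2 := by simp [embed, ← Pi.zero_def]
    _ ≤ _ := sq_apply_zero_le_mul_energy fun p hp ↦
        Function.support_subset_iff'.1 hφ _ (hN p hp)
    _ ≤ 2 * (8 * d * ham d W φ) := mul_le_mul (sum_inv_card_piAntidiag_le (by simpa using hd) N)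
        energy_le (by positivity) two_pos.le

/-- The Hamiltonian `ham d W` as a quadratic form. On fields supported in `B ⊆ W` it agrees with
`ham d B`, so this one form serves as the energy of the fields on all subsets of `W`. -/
noncomputable def gffForm (d : ℕ) (W : Finset (Fin d → ℤ)) :
    QuadraticForm ℝ ((Fin d → ℤ) → ℝ) :=
  (1 / (8 * d) : ℝ) • ∑ x ∈ W ∪ bdry d W, ∑ y ∈ W ∪ bdry d W,
    if y ∈ nbrs d x then QuadraticMap.sq.comp
      (LinearMap.proj (R := ℝ) (φ := fun _ ↦ ℝ) x - LinearMap.proj y) else 0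

lemma gffForm_apply (W : Finset (Fin d → ℤ)) (φ : (Fin d → ℤ) → ℝ) :
    gffForm d W φ = ham d W φ := by
  simp only [gffForm, ham, smul_apply, _root_.sum_apply, smul_eq_mul]
  congr! 4
  split_ifs <;> simp [sq]

lemma measurable_gffForm (W : Finset (Fin d → ℤ)) : Measurable (gffForm d W) := by
  rw [show ⇑(gffForm d W) = ham d W from funext (gffForm_apply W)]
  unfold ham
  refine measurable_const.mul <|
    Finset.measurable_sum _ fun x _ ↦ Finset.measurable_sum _ fun y _ ↦ ?_
  split_ifs <;> fun_prop

lemma isMarkovian_gffForm (W : Finset (Fin d → ℤ)) : IsMarkovian (gffForm d W) := by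
  intro f hf _ φ
  rw [gffForm_apply, gffForm_apply, ham, ham]
  gcongr with x _ y _
  split_ifs
  · exact sq_le_sq.2 (by simpa [Real.dist_eq] using hf.dist_le_mul (φ x) (φ y))
  · rfl

lemma varianceBoundedOn_gffForm (hd : 3 ≤ d) (W : Finset (Fin d → ℤ)) :
    VarianceBoundedOn (gffForm d W) W (8 * d) := by
  intro φ hφ x
  rw [gffForm_apply]
  simpa [mul_assoc] using sq_apply_le_ham hd hφ x

lemma ofReal_gffDensity (hBW : B ⊆ W) (ψ : B → ℝ) :
    ENNReal.ofReal (gffDensity d B ψ) =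
      gibbsWeight (gffForm d W) (Function.updateFinset 0 B ψ) := by
  rw [gibbsWeight, gffForm_apply, ← ham_eq_of_subset (support_updateFinset_zero_subset ψ) hBW]
  rfl

lemma map_withDensity_gffDensity (hBW : B ⊆ W) :
    (volume.withDensity fun ψ ↦ ENNReal.ofReal (gffDensity d B ψ)).map
      (Function.updateFinset (0 : (Fin d → ℤ) → ℝ) B) = gibbsMeasure (gffForm d W) B 0 := by
  simp only [ofReal_gffDensity hBW]
  ext E hE
  rw [Measure.map_apply measurable_updateFinset hE,
    withDensity_apply _ (measurable_updateFinset hE), gibbsMeasure, withDensity_apply _ hE,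
    setLIntegral_map hE (measurable_gibbsWeight (measurable_gffForm W)) measurable_updateFinset]

lemma ofReal_gffZ (hd : 3 ≤ d) (hBW : B ⊆ W) :
    ENNReal.ofReal (gffZ d B) = gibbsMeasure (gffForm d W) B 0 Set.univ := by
  have density_nonneg (ψ : B → ℝ) : 0 ≤ gffDensity d B ψ := (exp_pos _).le
  have measurable_density : Measurable (gffDensity d B) := by
    have density_eq : gffDensity d B = fun ψ ↦
        (gibbsWeight (gffForm d W) (Function.updateFinset 0 B ψ)).toReal := funext fun ψ ↦ by
      rw [← ofReal_gffDensity hBW, ENNReal.toReal_ofReal (density_nonneg ψ)]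
    rw [density_eq]
    exact ((measurable_gibbsWeight (measurable_gffForm W)).comp
      measurable_updateFinset).ennreal_toReal
  have mass_eq : ∫⁻ ψ, ENNReal.ofReal (gffDensity d B ψ) =
      gibbsMeasure (gffForm d W) B 0 Set.univ := by
    rw [← map_withDensity_gffDensity hBW,
      Measure.map_apply (measurable_updateFinset (x := (0 : (Fin d → ℤ) → ℝ))) MeasurableSet.univ,
      Set.preimage_univ, withDensity_apply _ .univ, setLIntegral_univ]
  have posDef : PosDefOn (gffForm d W) B := (varianceBoundedOn_gffForm hd W).posDefOn.mono hBW
  rw [gffZ, integral_eq_lintegral_of_nonneg_ae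
    (Filter.Eventually.of_forall density_nonneg) measurable_density.aestronglyMeasurable, mass_eq,
    ENNReal.ofReal_toReal (gibbsMeasure_zero_univ_ne (measurable_gffForm W) posDef).2]

lemma map_gff_eq_gibbsField (hd : 3 ≤ d) (hBW : B ⊆ W) :
    (gff d B).map (Function.updateFinset (0 : (Fin d → ℤ) → ℝ) B) =
      gibbsField (gffForm d W) B 0 := by
  rw [gff, gibbsField, Measure.map_smul, map_withDensity_gffDensity hBW, ofReal_gffZ hd hBW]

lemma gff_confined_eq_gibbsField (hd : 3 ≤ d) (hBW : B ⊆ W) {T : Finset (Fin d → ℤ)} (hT : T ⊆ B)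
    (a : ℝ) :
    gff d B {ψ | ∀ y : B, (y : Fin d → ℤ) ∈ T → ψ y ∈ Set.Icc 0 a} =
      gibbsField (gffForm d W) B 0 ((T : Set (Fin d → ℤ)).pi fun _ ↦ Set.Icc 0 a) := by
  rw [← map_gff_eq_gibbsField hd hBW,
    Measure.map_apply measurable_updateFinset (measurableSet_pi_Icc T a)]
  congr 1 with ψ
  refine ⟨fun h y hy ↦ ?_, fun h y hy ↦ ?_⟩
  · rw [Function.updateFinset, dif_pos (hT hy)]
    exact h ⟨y, hT hy⟩ hy
  · simpa only [Function.updateFinset, dif_pos y.2] using h y hy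

lemma gff_eval_eq_gibbsField (hd : 3 ≤ d) (hBW : B ⊆ W) {x : Fin d → ℤ} (hx : x ∈ B) (a : ℝ) :
    gff d B {ψ | ∀ y : B, (y : Fin d → ℤ) = x → ψ y ∈ Set.Icc 0 a} =
      gibbsField (gffForm d W) B 0 (Function.eval x ⁻¹' Set.Icc 0 a) := by
  simpa only [mem_singleton, coe_singleton, Set.singleton_pi] using
    gff_confined_eq_gibbsField hd hBW (singleton_subset_iff.2 hx) a

end Lattice

theorem gff_confinement_product_lower_bound_general (d : ℕ) (hd : 3 ≤ d) :
    ∃ c : ℝ, 0 < c ∧ ∀ W : Finset (Fin d → ℤ), ∀ a : ℝ, 0 < a → ∀ m : ℕ,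
      ∀ x : Fin m → Fin d → ℤ, Function.Injective x → (∀ i, x i ∈ W) →
        gff d W {ψ | ∀ y : W, (∃ i, (y : Fin d → ℤ) = x i) → ψ y ∈ Set.Icc 0 a} ≥
          ∏ i : Fin m,
            gff d (W \ (Finset.univ.filter (fun j => i < j)).image x)
              {ψ | ∀ y : (W \ (Finset.univ.filter (fun j => i < j)).image x : Finset (Fin d → ℤ)),
                (y : Fin d → ℤ) = x i → ψ y ∈ Set.Icc 0 a} ∧
        (∏ i : Fin m,
            gff d (W \ (Finset.univ.filter (fun j => i < j)).image x)
              {ψ | ∀ y : (W \ (Finset.univ.filter (fun j => i < j)).image x : Finset (Fin d → ℤ)),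
                (y : Fin d → ℤ) = x i → ψ y ∈ Set.Icc 0 a}) ≥
          ENNReal.ofReal ((c * min (1 / 2) a) ^ m) := by
  have c_pos : 0 < gaussianPDFReal 0 (8 * d) (1 / 2) :=
    gaussianPDFReal_pos _ _ _ (mul_ne_zero (by norm_num) (Nat.cast_ne_zero.2 (by lia)))
  refine ⟨_, c_pos, fun W a ha m x hx hxW ↦ ?_⟩
  have variance_bounded := varianceBoundedOn_gffForm hd W
  have mem_complement (i : Fin m) : x i ∈ W \ (univ.filter (i < ·)).image x := by
    simp [hxW i, hx.eq_iff]
  have joint_event : gff d W {ψ | ∀ y : W, (∃ i, (y : Fin d → ℤ) = x i) → ψ y ∈ Set.Icc 0 a} =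
      gibbsField (gffForm d W) W 0
        ((↑(univ.image x) : Set (Fin d → ℤ)).pi fun _ ↦ Set.Icc 0 a) := by
    rw [← gff_confined_eq_gibbsField hd subset_rfl (image_subset_iff.2 fun i _ ↦ hxW i)]
    simp only [mem_image, mem_univ, true_and, eq_comm]
  simp only [joint_event, gff_eval_eq_gibbsField hd sdiff_subset (mem_complement _)]
  constructor
  · exact prod_gibbsField_le_gibbsField_pi (measurable_gffForm W) (isMarkovian_gffForm W)
      variance_bounded.posDefOn ha.le univ hx.injOn fun i _ ↦ hxW i
  · rw [ENNReal.ofReal_pow (by positivity), ← Fin.prod_const]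
    exact prod_le_prod' fun i _ ↦ le_gibbsField_zero_Icc (measurable_gffForm W)
      (variance_bounded.mono sdiff_subset) (mem_complement i) a (by norm_num)

/-- For `d ≥ 3` there is `c = c(d) > 0` such that for `A = {x_1, …, x_m} ⊆ Λ_N` and
`A_i = {x_{i+1}, …, x_m}`, the GFF satisfies
`P_N(φ ∈ [0,a] on A) ≥ ∏ P_{A_i^c}(φ(x_i) ∈ [0,a]) ≥ (c · min (1/2) a)^m`. -/
theorem gff_confinement_product_lower_bound (d : ℕ) (hd : 3 ≤ d) :
    ∃ c : ℝ, 0 < c ∧ ∀ N : ℕ, ∀ a : ℝ, 0 < a → ∀ m : ℕ,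
      ∀ x : Fin m → Fin d → ℤ, Function.Injective x → (∀ i, x i ∈ box d N) →
        gff d (box d N)
            {ψ | ∀ y : box d N, (∃ i, (y : Fin d → ℤ) = x i) → ψ y ∈ Set.Icc 0 a} ≥
          ∏ i : Fin m,
            gff d (box d N \ (Finset.univ.filter (fun j => i < j)).image x)
              {ψ | ∀ y : (box d N \ (Finset.univ.filter (fun j => i < j)).image x : Finset (Fin d → ℤ)),
                (y : Fin d → ℤ) = x i → ψ y ∈ Set.Icc 0 a} ∧
        (∏ i : Fin m,
            gff d (box d N \ (Finset.univ.filter (fun j => i < j)).image x)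
              {ψ | ∀ y : (box d N \ (Finset.univ.filter (fun j => i < j)).image x : Finset (Fin d → ℤ)),
                (y : Fin d → ℤ) = x i → ψ y ∈ Set.Icc 0 a}) ≥
          ENNReal.ofReal ((c * min (1 / 2) a) ^ m) := by
  obtain ⟨c, hc, bound⟩ := gff_confinement_product_lower_bound_general d hd
  exact ⟨c, hc, fun N ↦ bound (box d N)⟩
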